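/- Under Assumptions 1, 2 and 3, suppose in addition ‖x(t)‖_v ≤ x̄ almost surely for all t. Then almost surely, for every t ≥ τ, ‖φ(t)‖_v ≤ 2ε̄ Σ_{k=t−τ+1}^{t} α_{k−1}, where ε̄ = 2x̄ + C + w̄/v̲. -/

import Mathlib

/-!
The conditional probabilities `d t i` lie in `[0, 1]` almost surely, so each diagonal entry of
`e_{i_t} e_{i_t}ᵀ - D_t` has absolute value at most `1`, and the contraction property bounds the
bracket in `φ(t)` by `(γ + 1) ‖x(t) - x(t-τ)‖_v ≤ 2 ‖x(t) - x(t-τ)‖_v`.  One update of the scheme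
moves the iterate by at most `α_t ((γ + 1) x̄ + C + w̄ / v̲) ≤ α_t ε̄` in the weighted norm
(`abs_update_sub_le`), and the triangle inequality sums these increments over the window of length
`τ` (`abs_sub_le_sum_Icc`).  Everything but the bound on `d` is a pathwise argument on the
almost sure event where all the noise terms and iterates obey their bounds.
-/

open MeasureTheory Finset

/-- Weighted infinity norm `‖x‖_v = max_i |x_i| / v_i`. -/
noncomputable def vnorm {n : ℕ} (v x : Fin n → ℝ) : ℝ := ⨆ i, |x i| / v i

lemma abs_le_vnorm_mul {n : ℕ} {v : Fin n → ℝ} (hv : ∀ i, 0 < v i) (x : Fin n → ℝ) (i : Fin n) :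
    |x i| ≤ vnorm v x * v i := by
  rw [← div_le_iff₀ (hv i)]
  exact le_ciSup (f := fun i => |x i| / v i) (Set.finite_range _).bddAbove i

lemma vnorm_le {n : ℕ} (hn : 0 < n) {v : Fin n → ℝ} (hv : ∀ i, 0 < v i) {x : Fin n → ℝ} {c : ℝ}
    (h : ∀ i, |x i| ≤ c * v i) : vnorm v x ≤ c := by
  haveI : Nonempty (Fin n) := ⟨⟨0, hn⟩⟩
  exact ciSup_le fun i => (div_le_iff₀ (hv i)).2 (h i)

lemma vnorm_nonneg {n : ℕ} {v : Fin n → ℝ} (hv : ∀ i, 0 < v i) (x : Fin n → ℝ) :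
    0 ≤ vnorm v x :=
  Real.iSup_nonneg fun i => div_nonneg (abs_nonneg _) (hv i).le

/-- The constant noise bound `b` becomes `(b / v̲) v_i` in the weighted norm. -/
lemma le_div_iInf_mul {n : ℕ} {v : Fin n → ℝ} (hv : ∀ i, 0 < v i) {b : ℝ} (hb : 0 ≤ b)
    (i : Fin n) : b ≤ b / (⨅ j, v j) * v i := by
  haveI : Nonempty (Fin n) := ⟨i⟩
  obtain ⟨j, hj⟩ := exists_eq_ciInf_of_finite (f := v)
  have hle : (⨅ j, v j) ≤ v i := ciInf_le (Set.finite_range _).bddBelow i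
  have hpos : 0 < ⨅ j, v j := hj ▸ hv j
  rw [div_mul_eq_mul_div, le_div_iff₀ hpos]
  exact mul_le_mul_of_nonneg_left hle hb

/-- The innovation `F x - x + w` is bounded by `ε̄ = 2x̄ + C + w̄/v̲` in the weighted norm; the
factor `γ` in front of `‖x‖_v` is discarded. -/
lemma abs_update_sub_le {n : ℕ} {v : Fin n → ℝ} (hv : ∀ i, 0 < v i)
    {F : (Fin n → ℝ) → (Fin n → ℝ)} {γ C : ℝ} (hγ1 : γ < 1)
    (hFbd : ∀ x, vnorm v (F x) ≤ γ * vnorm v x + C)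
    {x : Fin n → ℝ} {xbar w wbar : ℝ} (hx : vnorm v x ≤ xbar) (hw : |w| ≤ wbar) (i : Fin n) :
    |F x i - x i + w| ≤ (2 * xbar + C + wbar / ⨅ j, v j) * v i := by
  have h0 := vnorm_nonneg hv x
  have hF : vnorm v (F x) ≤ xbar + C := by nlinarith [hFbd x]
  have h1 : |F x i| ≤ (xbar + C) * v i :=
    (abs_le_vnorm_mul hv _ i).trans (mul_le_mul_of_nonneg_right hF (hv i).le)
  have h2 : |x i| ≤ xbar * v i :=
    (abs_le_vnorm_mul hv _ i).trans (mul_le_mul_of_nonneg_right hx (hv i).le)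
  have h3 := hw.trans (le_div_iInf_mul hv ((abs_nonneg w).trans hw) i)
  have h4 := abs_add_le (F x i - x i) w
  have h5 := abs_sub (F x i) (x i)
  linarith

lemma abs_sub_le_sum_Icc {a α : ℕ → ℝ} {c : ℝ} (h : ∀ k, |a (k + 1) - a k| ≤ c * α k)
    (s m : ℕ) : |a (s + m) - a s| ≤ c * ∑ k ∈ Finset.Icc (s + 1) (s + m), α (k - 1) := by
  induction m with
  | zero => simp
  | succ m ih =>
    rw [← add_assoc, Finset.sum_Icc_succ_top (by omega), mul_add, Nat.add_sub_cancel]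
    have h1 := h (s + m)
    have h2 := abs_sub_le (a (s + m + 1)) (a (s + m)) (a s)
    linarith

/-- The conditional probability of an event lies in `[0, 1]` almost surely. -/
lemma condExp_indicator_mem {Ω : Type*} {m m0 : MeasurableSpace Ω} (μ : Measure Ω)
    [IsProbabilityMeasure μ] (hm : m ≤ m0) {n : ℕ} {f : Ω → Fin n} (hf : Measurable f)
    (i : Fin n) :
    ∀ᵐ ω ∂μ, 0 ≤ (μ[(fun ω => if f ω = i then (1 : ℝ) else 0) | m]) ω ∧
      (μ[(fun ω => if f ω = i then (1 : ℝ) else 0) | m]) ω ≤ 1 := by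
  have hmeas : Measurable (fun ω => if f ω = i then (1 : ℝ) else 0) :=
    Measurable.ite (hf (measurableSet_singleton i)) measurable_const measurable_const
  have hint : Integrable (fun ω => if f ω = i then (1 : ℝ) else 0) μ := by
    refine Integrable.of_bound hmeas.aestronglyMeasurable 1 (ae_of_all _ fun ω => ?_)
    split_ifs <;> simp
  have h0 : 0 ≤ᵐ[μ] μ[(fun ω => if f ω = i then (1 : ℝ) else 0) | m] :=
    condExp_nonneg (ae_of_all _ fun ω => by dsimp; split_ifs <;> simp)
  have h1 : μ[(fun ω => if f ω = i then (1 : ℝ) else 0) | m] ≤ᵐ[μ] μ[(fun _ => (1 : ℝ)) | m] :=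
    condExp_mono hint (integrable_const _) (ae_of_all _ fun ω => by dsimp; split_ifs <;> simp)
  rw [condExp_const hm] at h1
  filter_upwards [h0, h1] with ω a b using ⟨a, b⟩

/-- **Lemma 2(b).** Under Assumptions 1, 2 and 3 and the almost-sure bound `‖x(t)‖_v ≤ x̄`,
the term `φ(t) = (e_{i_t}e_{i_t}ᵀ - D_t)[F(x(t)) - F(x(t-τ)) - (x(t) - x(t-τ))]` satisfies
`‖φ(t)‖_v ≤ 2ε̄ Σ_{k=t-τ+1}^t α_{k-1}` almost surely, for every `t ≥ τ`,
where `ε̄ = 2x̄ + C + w̄/v̲`. -/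
theorem SA_phi_bounded
    {Ω : Type*} {m0 : MeasurableSpace Ω} (μ : Measure Ω) [IsProbabilityMeasure μ]
    (ℱ : Filtration ℕ m0)
    (n : ℕ) (hn : 0 < n) (v : Fin n → ℝ) (hv : ∀ i, 0 < v i)
    -- Assumption 1 (contraction)
    (F : (Fin n → ℝ) → (Fin n → ℝ)) (γ C : ℝ) (hγ0 : 0 < γ) (hγ1 : γ < 1) (hC : 0 < C)
    (hcontr : ∀ x y, vnorm v (F x - F y) ≤ γ * vnorm v (x - y))
    (hFbd : ∀ x, vnorm v (F x) ≤ γ * vnorm v x + C)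
    (xstar : Fin n → ℝ) (hfix : F xstar = xstar)
    -- the asynchronous SA scheme
    (idx : ℕ → Ω → Fin n) (hidx : ∀ t, Measurable[ℱ t] (idx t))
    (w : ℕ → Ω → ℝ) (wbar : ℝ)
    (α : ℕ → ℝ) (hα : ∀ t, α t ∈ Set.Ioc (0 : ℝ) 1)
    (X : ℕ → Ω → Fin n → ℝ) (hX0 : ∀ ω, X 0 ω = 0)
    (hupd : ∀ t ω i, X (t + 1) ω i =
      if i = idx t ω then X t ω i + α t * (F (X t ω) i - X t ω i + w t ω) else X t ω i)
    -- Assumption 2 (martingale difference noise)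
    (hw_meas : ∀ t, Measurable[ℱ (t + 1)] (w t))
    (hw_mean : ∀ t, μ[w t | ℱ t] =ᵐ[μ] 0)
    (hw_bd : ∀ t, ∀ᵐ ω ∂μ, |w t ω| ≤ wbar)
    -- Assumption 3 (sufficient exploration), with `d_{t,i} = P(i_t = i | ℱ_{t-τ})`
    (sg : ℝ) (τ : ℕ) (hsg0 : 0 < sg) (hsg1 : sg < 1) (hτ : 0 < τ)
    (d : ℕ → Fin n → Ω → ℝ)
    (hd : ∀ t i, d t i = μ[(fun ω => if idx t ω = i then (1 : ℝ) else 0) | ℱ (t - τ)])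
    (hexpl : ∀ (i : Fin n) (t : ℕ), τ ≤ t → ∀ᵐ ω ∂μ, sg ≤ d t i ω)
    -- almost sure boundedness of the iterates
    (xbar : ℝ) (hXbd : ∀ t, ∀ᵐ ω ∂μ, vnorm v (X t ω) ≤ xbar)
    -- the drift vector `φ(t)`
    (phi : ℕ → Ω → Fin n → ℝ)
    (hphi : ∀ t ω i, phi t ω i =
      ((if idx t ω = i then (1 : ℝ) else 0) - d t i ω) *
        (F (X t ω) i - F (X (t - τ) ω) i - (X t ω i - X (t - τ) ω i))) :
    ∀ t, τ ≤ t → ∀ᵐ ω ∂μ,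
      vnorm v (phi t ω) ≤
        2 * (2 * xbar + C + wbar / ⨅ i, v i) * ∑ k ∈ Finset.Icc (t - τ + 1) t, α (k - 1) := by
  intro t ht
  have hd01 : ∀ᵐ ω ∂μ, ∀ i, 0 ≤ d t i ω ∧ d t i ω ≤ 1 := by
    rw [ae_all_iff]
    intro i
    rw [hd t i]
    exact condExp_indicator_mem μ (ℱ.le _) ((hidx t).mono (ℱ.le t) le_rfl) i
  filter_upwards [hd01, ae_all_iff.2 hw_bd, ae_all_iff.2 hXbd] with ω hdω hwω hXω
  set ε := 2 * xbar + C + wbar / ⨅ i, v i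
  have hstep : ∀ i k, |X (k + 1) ω i - X k ω i| ≤ (ε * v i) * α k := by
    intro i k
    have hb := abs_update_sub_le hv hγ1 hFbd (hXω k) (hwω k) i
    have hα0 := (hα k).1.le
    rw [hupd]
    split_ifs
    · rw [add_sub_cancel_left, abs_mul, abs_of_nonneg hα0, mul_comm]
      exact mul_le_mul_of_nonneg_right hb hα0
    · rw [sub_self, abs_zero]
      exact mul_nonneg ((abs_nonneg _).trans hb) hα0
  set S := ∑ k ∈ Finset.Icc (t - τ + 1) t, α (k - 1)
  have hdiff : vnorm v (X t ω - X (t - τ) ω) ≤ ε * S := by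
    refine vnorm_le hn hv fun i => ?_
    have h := abs_sub_le_sum_Icc (a := fun k => X k ω i) (hstep i) (t - τ) τ
    rw [Nat.sub_add_cancel ht] at h
    rw [Pi.sub_apply, mul_right_comm]
    exact h
  have h0 := vnorm_nonneg hv (X t ω - X (t - τ) ω)
  have hFdiff : vnorm v (F (X t ω) - F (X (t - τ) ω)) ≤ ε * S := by
    nlinarith [hcontr (X t ω) (X (t - τ) ω)]
  refine vnorm_le hn hv fun i => ?_
  have hcoef : |(if idx t ω = i then (1 : ℝ) else 0) - d t i ω| ≤ 1 := by
    obtain ⟨ha, hb⟩ := hdω i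
    rw [abs_le]
    split_ifs <;> constructor <;> linarith
  have h1 := (abs_le_vnorm_mul hv _ i).trans (mul_le_mul_of_nonneg_right hFdiff (hv i).le)
  have h2 := (abs_le_vnorm_mul hv _ i).trans (mul_le_mul_of_nonneg_right hdiff (hv i).le)
  rw [Pi.sub_apply] at h1 h2
  rw [hphi, abs_mul]
  refine (mul_le_of_le_one_left (abs_nonneg _) hcoef).trans ?_
  have h3 := abs_sub (F (X t ω) i - F (X (t - τ) ω) i) (X t ω i - X (t - τ) ω i)
  linarith
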